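/- arXiv:1610.07319 — 2 statements merged into one kernel-verified Lean document; each statement's English description precedes it below -/
import Mathlib

section
/- Let ψ₁ and ψ₂ be unit vectors in ℂ^D and let M(1),…,M(n) be an n-outcome POVM on ℂ^D. Then |⟨ψ₁,ψ₂⟩| ≤ Σ_{i=1}^n ⟨ψ₁, M(i)ψ₁⟩^{1/2} · ⟨ψ₂, M(i)ψ₂⟩^{1/2}. -/
open scoped BigOperators Kronecker ComplexOrder Matrix

noncomputable section


namespace QProg

/-- The positive-semidefinite square root of a matrix, extended by `0` to all matrices. -/
noncomputable def matSqrt {α : Type*} [Fintype α] [DecidableEq α]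
    (A : Matrix α α ℂ) : Matrix α α ℂ :=
  @dite _ A.PosSemidef (Classical.propDecidable _) (fun h =>
    (h.1.eigenvectorUnitary : Matrix α α ℂ) *
      Matrix.diagonal ((fun x : ℝ => (x : ℂ)) ∘ Real.sqrt ∘ h.1.eigenvalues) *
      (star h.1.eigenvectorUnitary : Matrix α α ℂ)) (fun _ => 0)

/-- The fidelity `F(ρ,σ) = Tr √(√ρ σ √ρ)` of two (density) matrices. -/
noncomputable def fid {α : Type*} [Fintype α] [DecidableEq α]
    (ρ σ : Matrix α α ℂ) : ℝ :=
  ((matSqrt (matSqrt ρ * σ * matSqrt ρ)).trace).re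

/-- A density matrix: positive semidefinite with unit trace. -/
def IsDensity {α : Type*} [Fintype α] [DecidableEq α] (ρ : Matrix α α ℂ) : Prop :=
  ρ.PosSemidef ∧ ρ.trace = 1

/-- An `n`-outcome POVM: positive semidefinite effects summing to the identity. -/
def IsPOVM {α : Type*} [Fintype α] [DecidableEq α] {n : ℕ}
    (E : Fin n → Matrix α α ℂ) : Prop :=
  (∀ i, (E i).PosSemidef) ∧ ∑ i, E i = 1

/-- The outcome distribution `p^E_ρ(i) = Tr[E(i) ρ]`. -/
noncomputable def outDist {α : Type*} [Fintype α] [DecidableEq α] {n : ℕ}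
    (E : Fin n → Matrix α α ℂ) (ρ : Matrix α α ℂ) (i : Fin n) : ℝ :=
  ((E i * ρ).trace).re

/-- The Bhattacharyya coefficient `B(p,q) = ∑ᵢ √(p i) √(q i)`. -/
noncomputable def bhat {n : ℕ} (p q : Fin n → ℝ) : ℝ :=
  ∑ i, Real.sqrt (p i) * Real.sqrt (q i)

/-- `B(E₁,E₂)`: infimum of `B(p^{E₁}_{ρ₁}, p^{E₂}_{ρ₂}) / F(ρ₁,ρ₂)` over pairs of
density matrices with nonvanishing fidelity. -/
noncomputable def obsB {α : Type*} [Fintype α] [DecidableEq α] {n : ℕ}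
    (E₁ E₂ : Fin n → Matrix α α ℂ) : ℝ :=
  sInf { r : ℝ | ∃ ρ₁ ρ₂ : Matrix α α ℂ, IsDensity ρ₁ ∧ IsDensity ρ₂ ∧
    fid ρ₁ ρ₂ ≠ 0 ∧ r = bhat (outDist E₁ ρ₁) (outDist E₂ ρ₂) / fid ρ₁ ρ₂ }

/-- A post-processing from `n` outcomes to `m` outcomes. -/
def IsPostProc {n m : ℕ} (lam : Fin n → Fin m → ℝ) : Prop :=
  (∀ i y, 0 ≤ lam i y) ∧ ∀ i, ∑ y, lam i y = 1

/-- The action `(λ⋆E)(y) = ∑ᵢ λ(i|y) E(i)` of a post-processing on a POVM. -/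
noncomputable def ppStar {α : Type*} [Fintype α] [DecidableEq α] {n m : ℕ}
    (lam : Fin n → Fin m → ℝ) (E : Fin n → Matrix α α ℂ) (y : Fin m) :
    Matrix α α ℂ :=
  ∑ i, (lam i y : ℂ) • E i

/-- The action `(λ⋆p)(y) = ∑ᵢ λ(i|y) p(i)` of a post-processing on a probability vector. -/
noncomputable def ppStarVec {n m : ℕ} (lam : Fin n → Fin m → ℝ) (p : Fin n → ℝ)
    (y : Fin m) : ℝ :=
  ∑ i, lam i y * p i

/-- A probability vector on `{1,…,n}`. -/
def IsProbVec {n : ℕ} (p : Fin n → ℝ) : Prop :=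
  (∀ i, 0 ≤ p i) ∧ ∑ i, p i = 1

/-- `F(λ₁,λ₂)`: infimum of `B(λ₁⋆p, λ₂⋆p)` over probability vectors `p`. -/
noncomputable def ppF {n m : ℕ} (lam₁ lam₂ : Fin n → Fin m → ℝ) : ℝ :=
  sInf { r : ℝ | ∃ p : Fin n → ℝ, IsProbVec p ∧
    r = bhat (ppStarVec lam₁ p) (ppStarVec lam₂ p) }

/-- Cauchy–Schwarz for the semi-inner product given by a positive semidefinite matrix. -/
lemma posSemidef_cauchy_schwarz {D : ℕ} (A : Matrix (Fin D) (Fin D) ℂ) (hA : A.PosSemidef)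
    (x y : Fin D → ℂ) :
    ‖star x ⬝ᵥ A.mulVec y‖ ≤ Real.sqrt ((star x ⬝ᵥ A.mulVec x).re) *
        Real.sqrt ((star y ⬝ᵥ A.mulVec y).re) := by
  obtain ⟨B, hB⟩ : ∃ B : Matrix (Fin D) (Fin D) ℂ, A = Bᴴ * B := by
    open scoped MatrixOrder Matrix.Norms.L2Operator in
    exact CStarAlgebra.nonneg_iff_eq_star_mul_self.mp (Matrix.nonneg_iff_posSemidef.mpr hA)
  subst hB
  have key : ∀ u v : Fin D → ℂ, star u ⬝ᵥ (Bᴴ * B).mulVec v =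
      inner ℂ (WithLp.toLp 2 (B.mulVec u)) (WithLp.toLp 2 (B.mulVec v)) := by
    intro u v
    rw [EuclideanSpace.inner_toLp_toLp, ← Matrix.mulVec_mulVec, Matrix.dotProduct_mulVec,
      ← Matrix.star_mulVec, dotProduct_comm]
  have hn : ∀ u : Fin D → ℂ, Real.sqrt ((star u ⬝ᵥ (Bᴴ * B).mulVec u).re) =
      ‖WithLp.toLp 2 (B.mulVec u)‖ := by
    intro u
    rw [key, norm_eq_sqrt_re_inner (𝕜 := ℂ)]
    rfl
  rw [hn, hn, key]
  exact norm_inner_le_norm _ _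

/-- For unit vectors `ψ₁, ψ₂` in `ℂ^D` and an `n`-outcome POVM `M` on `ℂ^D`,
`|⟨ψ₁,ψ₂⟩| ≤ ∑ᵢ ⟨ψ₁, M(i)ψ₁⟩^{1/2} ⟨ψ₂, M(i)ψ₂⟩^{1/2}`. -/
theorem povm_cauchy_schwarz_overlap {D n : ℕ}
    (ψ₁ ψ₂ : Fin D → ℂ)
    (hψ₁ : star ψ₁ ⬝ᵥ ψ₁ = 1) (hψ₂ : star ψ₂ ⬝ᵥ ψ₂ = 1)
    (M : Fin n → Matrix (Fin D) (Fin D) ℂ) (hM : IsPOVM M) :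
    ‖star ψ₁ ⬝ᵥ ψ₂‖ ≤
      ∑ i, Real.sqrt ((star ψ₁ ⬝ᵥ (M i).mulVec ψ₁).re) *
        Real.sqrt ((star ψ₂ ⬝ᵥ (M i).mulVec ψ₂).re) := by
  have h : star ψ₁ ⬝ᵥ ψ₂ = ∑ i, star ψ₁ ⬝ᵥ (M i).mulVec ψ₂ := by
    rw [← dotProduct_sum, ← Matrix.sum_mulVec, hM.2, Matrix.one_mulVec]
  rw [h]
  exact (norm_sum_le _ _).trans
    (Finset.sum_le_sum fun i _ => posSemidef_cauchy_schwarz (M i) (hM.1 i) ψ₁ ψ₂)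
end QProg
end
end

section
/- Let d be an odd prime and ω = exp(2πi/d). For each k ∈ {0,1,…,d−1}, define the unit vector ψ_k ∈ ℂ^d with components (ψ_k)_j = (1/√d)·ω^{j(j−1)k/2 − j} in the standard basis (φ_j)_{j=0}^{d−1} (note j(j−1)/2 is an integer), and define ψ_∞ = φ_0. Then |⟨ψ_j, ψ_k⟩| = 1/√d for all j ≠ k in {0,1,…,d−1}, and |⟨ψ_∞, ψ_k⟩| = 1/√d for all k ∈ {0,1,…,d−1}. -/
open scoped BigOperators Kronecker ComplexOrder Matrix

noncomputable section


namespace QProg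

lemma quad_sum_norm {p : ℕ} [Fact p.Prime] (h2 : (2 : ZMod p) ≠ 0) (c : ZMod p) (hc : c ≠ 0) :
    ‖∑ x : ZMod p, ZMod.stdAddChar (c * (x * (x - 1)))‖ = Real.sqrt p := by
  set S := ∑ x : ZMod p, ZMod.stdAddChar (c * (x * (x - 1))) with hS
  have key : (starRingEnd ℂ) S * S = (p : ℂ) := by
    have h1 : (starRingEnd ℂ) S = ∑ x : ZMod p, ZMod.stdAddChar (-(c * (x * (x - 1)))) := by
      rw [hS, map_sum]
      refine Finset.sum_congr rfl fun x _ => ?_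
      rw [AddChar.map_neg_eq_conj]
    rw [h1, Finset.sum_mul]
    have h3 : ∀ x : ZMod p, ZMod.stdAddChar (-(c * (x * (x - 1)))) * S =
        ∑ t : ZMod p, ZMod.stdAddChar (c * (t * (t - 1))) *
          ZMod.stdAddChar (x * (2 * c * t)) := by
      intro x
      rw [hS, ← Equiv.sum_comp (Equiv.addLeft x), Finset.mul_sum]
      refine Finset.sum_congr rfl fun t _ => ?_
      rw [← AddChar.map_add_eq_mul, ← AddChar.map_add_eq_mul]
      congr 1
      simp only [Equiv.coe_addLeft]
      ring
    rw [Finset.sum_congr rfl fun x _ => h3 x, Finset.sum_comm]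
    simp_rw [← Finset.mul_sum, AddChar.sum_mulShift _ (ZMod.isPrimitive_stdAddChar p)]
    rw [Finset.sum_eq_single 0]
    · simp [ZMod.card]
    · intro t _ ht
      simp [h2, hc, ht]
    · simp
  rw [← Complex.normSq_eq_conj_mul_self] at key
  have key' : Complex.normSq S = p := by exact_mod_cast key
  rw [Complex.norm_def, key']

/-- finite phase space example, Section 3.3: the programming vectors
`ψ_0,…,ψ_{d−1}` and `ψ_∞ = φ_0` are pairwise non-orthogonal with overlaps of modulus `1/√d`. -/
theorem phase_space_overlaps {d : ℕ} [NeZero d] (hd : d.Prime) (hodd : Odd d)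
    (ω : ℂ) (hω : ω = Complex.exp (2 * Real.pi * Complex.I / d))
    (ψ : ℕ → Fin d → ℂ)
    (hψ : ∀ k : ℕ, k < d → ψ k = fun j : Fin d =>
      ((Real.sqrt d : ℝ) : ℂ)⁻¹ *
        ω ^ ((((j.val * (j.val - 1)) / 2 * k : ℕ) : ℤ) - (j.val : ℤ)))
    (ψinf : Fin d → ℂ) (hψinf : ψinf = (Pi.single 0 (1 : ℂ) : Fin d → ℂ)) :
    (∀ j k : ℕ, j < d → k < d → j ≠ k →
      ‖star (ψ j) ⬝ᵥ ψ k‖ = 1 / Real.sqrt d) ∧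
    (∀ k : ℕ, k < d →
      ‖star ψinf ⬝ᵥ ψ k‖ = 1 / Real.sqrt d) := by
  have : Fact d.Prime := ⟨hd⟩
  have hd2 : d ≠ 2 := by
    rintro rfl
    exact absurd hodd (by decide)
  have h2 : (2 : ZMod d) ≠ 0 := by
    intro h
    have h' : ((2 : ℕ) : ZMod d) = 0 := by exact_mod_cast h
    rw [ZMod.natCast_eq_zero_iff] at h'
    exact hd2 ((Nat.prime_dvd_prime_iff_eq hd Nat.prime_two).1 h')
  have hz : ∀ n : ℤ, ω ^ n = ZMod.stdAddChar (n : ZMod d) := by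
    intro n
    rw [ZMod.stdAddChar_coe, hω, ← Complex.exp_int_mul]
    congr 1
    ring
  have hpos : 0 < (d : ℝ) := by exact_mod_cast hd.pos
  have hsq : Real.sqrt d * Real.sqrt d = d := Real.mul_self_sqrt hpos.le
  have hs0 : 0 < Real.sqrt d := Real.sqrt_pos.2 hpos
  constructor
  · intro j k hj hk hjk
    have hc : ((k : ZMod d) - j) * 2⁻¹ ≠ 0 := by
      refine mul_ne_zero ?_ (inv_ne_zero h2)
      rw [sub_ne_zero]
      intro h
      rw [ZMod.natCast_eq_natCast_iff', Nat.mod_eq_of_lt hk, Nat.mod_eq_of_lt hj] at h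
      exact hjk h.symm
    have hbij : Function.Bijective (fun i : Fin d => (i.val : ZMod d)) := by
      rw [Fintype.bijective_iff_injective_and_card]
      refine ⟨fun a b h => ?_, by simp [ZMod.card]⟩
      have h' : (a.val : ZMod d) = b.val := h
      rw [ZMod.natCast_eq_natCast_iff', Nat.mod_eq_of_lt a.2, Nat.mod_eq_of_lt b.2] at h'
      exact Fin.ext h'
    have hsum : star (ψ j) ⬝ᵥ ψ k = (((Real.sqrt d)⁻¹ * (Real.sqrt d)⁻¹ : ℝ) : ℂ) *
        ∑ x : ZMod d, ZMod.stdAddChar (((k : ZMod d) - (j : ZMod d)) * (2 : ZMod d)⁻¹ * (x * (x - 1))) := by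
      rw [← Function.Bijective.sum_comp hbij, Finset.mul_sum]
      unfold dotProduct
      refine Finset.sum_congr rfl fun i _ => ?_
      rw [hψ j hj, hψ k hk]
      simp only [Pi.star_apply, star_mul', hz]
      have hst : ∀ z : ZMod d, star (ZMod.stdAddChar z : ℂ) = ZMod.stdAddChar (-z) := by
        intro z
        rw [AddChar.map_neg_eq_conj]
        rfl
      have hr : star (((Real.sqrt d : ℝ) : ℂ)⁻¹) = ((Real.sqrt d : ℝ) : ℂ)⁻¹ := by
        rw [← Complex.ofReal_inv]
        exact Complex.conj_ofReal _
      rw [hst, hr, mul_mul_mul_comm, ← AddChar.map_add_eq_mul]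
      push_cast
      congr 2
      have ht : ((i.val * (i.val - 1) / 2 : ℕ) : ZMod d) = 2⁻¹ * ((i.val : ZMod d) * (i.val - 1)) := by
        rw [eq_inv_mul_iff_mul_eq₀ h2]
        have e : 2 * (i.val * (i.val - 1) / 2) = i.val * (i.val - 1) :=
          Nat.mul_div_cancel' (Nat.even_mul_pred_self i.val).two_dvd
        have e' := congrArg (Nat.cast : ℕ → ZMod d) e
        push_cast at e'
        rw [e']
        rcases Nat.eq_zero_or_pos i.val with h | h
        · simp [h]
        · rw [Nat.cast_sub h, Nat.cast_one]
      have hgen : ∀ m : ℕ, (((i.val * (i.val - 1) / 2 * m : ℕ) : ℤ) : ZMod d) =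
          2⁻¹ * ((i.val : ZMod d) * (i.val - 1)) * m := by
        intro m
        rw [Int.cast_natCast, Nat.cast_mul, ht]
      have hj' := hgen j
      have hk' := hgen k
      push_cast at hj' hk'
      rw [hj', hk']
      ring
    rw [hsum, norm_mul, quad_sum_norm h2 _ hc, Complex.norm_real, Real.norm_of_nonneg (by positivity)]
    field_simp
  · intro k hk
    rw [hψinf, hψ k hk]
    have : star (Pi.single 0 (1 : ℂ) : Fin d → ℂ) = Pi.single 0 1 := by
      rw [← Pi.single_star, star_one]
    rw [this, single_dotProduct]
    simp [abs_of_pos hs0]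
end QProg
end
end
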